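/- In R′, the sum of the diagonal commutators satisfies ∑_{k=2}^{n} [x_k, x_{k−1}] = ∑_{p=1}^{n−2} ∑_{j=2}^{n−p} j·[x_p, x_{j+p}], where the factor j in front of the bracket is the integer j. -/

import Mathlib

open Finset

/-- The `k`-th elementary polynomial `σ_k` in the noncommuting variables
`x_1, …, x_n` of the free algebra `K⟨x_1,…,x_n⟩`. -/
noncomputable def elemPoly (K : Type*) [Field K] (n k : ℕ) : FreeAlgebra K (Fin n) :=
  ∑ s ∈ Finset.univ.powersetCard k, ((s.sort (· ≤ ·)).map (FreeAlgebra.ι K)).prod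

/-- The relation on the free algebra identifying `x_i * σ_k` with `σ_k * x_i`
for `1 ≤ i, k ≤ n`; the quotient `R′ = P/I` by the two-sided ideal `I` generated
by the commutators `[x_i, σ_k]` is `RingQuot` of this relation. -/
noncomputable def commRel (K : Type*) [Field K] (n : ℕ) :
    FreeAlgebra K (Fin n) → FreeAlgebra K (Fin n) → Prop :=
  fun a b => ∃ (i : Fin n) (k : ℕ), 1 ≤ k ∧ k ≤ n ∧
    a = FreeAlgebra.ι K i * elemPoly K n k ∧ b = elemPoly K n k * FreeAlgebra.ι K i

/-- The quotient ring `R′ = P/I`. -/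
noncomputable abbrev Rquot (K : Type*) [Field K] (n : ℕ) := RingQuot (commRel K n)

/-- The quotient map `P → R′`. -/
noncomputable def mkR (K : Type*) [Field K] (n : ℕ) :
    FreeAlgebra K (Fin n) →ₐ[K] Rquot K n :=
  RingQuot.mkAlgHom K (commRel K n)

/-- The image in `R′` of the generator `x_i`. -/
noncomputable def XR (K : Type*) [Field K] (n : ℕ) (i : Fin n) : Rquot K n :=
  mkR K n (FreeAlgebra.ι K i)

/-- One-based labelling of the images in `R′` of the generators: `Xone K n m` is
the image of `x_m` for `1 ≤ m ≤ n` (with a junk value `0` for `m > n`). -/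
noncomputable def Xone (K : Type*) [Field K] (n : ℕ) (m : ℕ) : Rquot K n :=
  if h : m - 1 < n then XR K n ⟨m - 1, h⟩ else 0

theorem aux_A {R : Type*} [Ring R] (x : ℕ → R) (n : ℕ) :
    ∑ p ∈ Finset.Icc 1 n, ∑ q ∈ Finset.Icc 1 n, (p : ℤ) • (x p * x q - x q * x p) =
      - ∑ q ∈ Finset.Icc 1 n, ∑ p ∈ Finset.Icc 1 (q - 1),
          ((q : ℤ) - (p : ℤ)) • (x p * x q - x q * x p) := by
  induction n with
  | zero => simp
  | succ n ih =>
    rw [Finset.sum_Icc_succ_top (by omega), Finset.sum_Icc_succ_top (b := n) (by omega)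
      (fun q => ∑ p ∈ Finset.Icc 1 (q - 1), ((q : ℤ) - (p : ℤ)) • (x p * x q - x q * x p)),
      neg_add, ← ih]
    have h1 : ∀ p : ℕ, ∑ q ∈ Finset.Icc 1 (n+1), (p : ℤ) • (x p * x q - x q * x p) =
        ∑ q ∈ Finset.Icc 1 n, (p : ℤ) • (x p * x q - x q * x p)
          + (p : ℤ) • (x p * x (n+1) - x (n+1) * x p) :=
      fun p => Finset.sum_Icc_succ_top (by omega) _
    simp only [h1, Finset.sum_add_distrib, Nat.add_sub_cancel, sub_self, smul_zero, add_zero]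
    rw [add_assoc, ← Finset.sum_add_distrib, ← Finset.sum_neg_distrib]
    congr 1
    refine Finset.sum_congr rfl fun p _ => ?_
    rw [sub_smul, ← neg_sub (x p * x (n+1)), smul_neg]
    abel

theorem aux_main {R : Type*} [Ring R] (x : ℕ → R) (n : ℕ) (hn : 3 ≤ n)
    (h : ∀ p ∈ Finset.Icc 1 n, x p * ∑ q ∈ Finset.Icc 1 n, x q =
      (∑ q ∈ Finset.Icc 1 n, x q) * x p) :
    ∑ k ∈ Finset.Icc 2 n, (x k * x (k - 1) - x (k - 1) * x k) =
      ∑ p ∈ Finset.Icc 1 (n - 2), ∑ j ∈ Finset.Icc 2 (n - p),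
        j • (x p * x (j + p) - x (j + p) * x p) := by
  have hA := aux_A x n
  rw [Finset.sum_eq_zero, eq_comm, neg_eq_zero] at hA
  swap
  · intro p hp
    rw [← Finset.smul_sum, Finset.sum_sub_distrib, ← Finset.mul_sum, ← Finset.sum_mul, h p hp,
      sub_self, smul_zero]
  have hR : ∑ p ∈ Finset.Icc 1 (n - 2), ∑ j ∈ Finset.Icc 2 (n - p),
        j • (x p * x (j + p) - x (j + p) * x p) =
      ∑ q ∈ Finset.Icc 2 n, ∑ p ∈ Finset.Icc 1 (q - 2),
        ((q : ℤ) - (p : ℤ)) • (x p * x q - x q * x p) := by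
    rw [Finset.sum_sigma', Finset.sum_sigma']
    refine Finset.sum_bij' (fun a _ => ⟨a.2 + a.1, a.1⟩) (fun a _ => ⟨a.2, a.1 - a.2⟩) ?_ ?_ ?_ ?_ ?_
    · rintro ⟨a, b⟩ h; simp only [Finset.mem_sigma, Finset.mem_Icc] at h ⊢; omega
    · rintro ⟨a, b⟩ h; simp only [Finset.mem_sigma, Finset.mem_Icc] at h ⊢; omega
    · rintro ⟨a, b⟩ h; simp
    · rintro ⟨a, b⟩ h
      simp only [Finset.mem_sigma, Finset.mem_Icc] at h
      have : a - b + b = a := by omega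
      simp [this]
    · rintro ⟨a, b⟩ h; simp
  rw [hR, ← sub_eq_zero, ← neg_eq_zero, neg_sub, ← Finset.sum_sub_distrib, ← hA,
    ← Finset.add_sum_Ioc_eq_sum_Icc (a := 1) (b := n) (by omega)]
  simp only [Nat.sub_self, Finset.Icc_eq_empty_of_lt Nat.zero_lt_one, Finset.sum_empty, zero_add]
  have : Finset.Ioc 1 n = Finset.Icc 2 n := by ext; simp; omega
  rw [this]
  refine Finset.sum_congr rfl fun q hq => ?_
  obtain ⟨m, rfl⟩ : ∃ m, q = m + 2 := ⟨q - 2, by simp at hq; omega⟩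
  rw [show m + 2 - 1 = m + 1 by omega, Finset.sum_Icc_succ_top (by omega), Nat.add_sub_cancel]
  push_cast
  rw [show ((m : ℤ) + 2 - (m + 1)) = 1 by ring]
  simp
  abel

theorem aux_sigma (K : Type*) [Field K] (n : ℕ) :
    mkR K n (elemPoly K n 1) = ∑ q ∈ Finset.Icc 1 n, Xone K n q := by
  have h1 : elemPoly K n 1 = ∑ i : Fin n, FreeAlgebra.ι K i := by
    simp [elemPoly, Finset.powersetCard_one]
  rw [h1, map_sum]
  have h2 : Finset.Icc 1 n = (Finset.range n).image (· + 1) := by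
    ext a; simp only [Finset.mem_Icc, Finset.mem_image, Finset.mem_range]
    exact ⟨fun h => ⟨a - 1, by omega, by omega⟩, by rintro ⟨b, h, rfl⟩; omega⟩
  rw [h2, Finset.sum_image (by intro a _ b _ h; simpa using h), Finset.sum_range]
  refine Finset.sum_congr rfl fun i _ => ?_
  simp [Xone, XR]

theorem aux_comm (K : Type*) [Field K] (n p : ℕ) (hp : p ∈ Finset.Icc 1 n) :
    Xone K n p * ∑ q ∈ Finset.Icc 1 n, Xone K n q =
      (∑ q ∈ Finset.Icc 1 n, Xone K n q) * Xone K n p := by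
  rw [Finset.mem_Icc] at hp
  have h : p - 1 < n := by omega
  rw [← aux_sigma, Xone, dif_pos h, XR, ← map_mul, ← map_mul]
  exact RingQuot.mkAlgHom_rel K ⟨⟨p - 1, h⟩, 1, le_rfl, by omega, rfl, rfl⟩

/-- In `R′`, the sum of the diagonal commutators satisfies
`∑_{k=2}^{n} [x_k, x_{k−1}] = ∑_{p=1}^{n−2} ∑_{j=2}^{n−p} j·[x_p, x_{j+p}]`,
where the factor `j` is the integer `j`. -/
theorem sum_diagonal_commutators
    (K : Type*) [Field K] [CharZero K] (n : ℕ) (hn : 3 ≤ n) :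
    ∑ k ∈ Finset.Icc 2 n, (Xone K n k * Xone K n (k - 1) - Xone K n (k - 1) * Xone K n k) =
      ∑ p ∈ Finset.Icc 1 (n - 2), ∑ j ∈ Finset.Icc 2 (n - p),
        j • (Xone K n p * Xone K n (j + p) - Xone K n (j + p) * Xone K n p) := by
  exact aux_main (Xone K n) n hn (aux_comm K n)
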